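/- Let X be a topological graph. The following are equivalent: (1) X is homeomorphic to the circle S¹; (3) 0 ∈ P_h(X), i.e., some group of homeomorphisms of X acts minimally (has no proper nonempty closed invariant subset); (4) every vertex of X has degree 2. Moreover in that case P_h(X) = {0,1,2,...} ∪ {+∞}. -/

import Mathlib

open Set Topology unitInterval

noncomputable section

/-- Group structure on self-homeomorphisms (composition). -/
instance homeoGroup {X : Type*} [TopologicalSpace X] : Group (X ≃ₜ X) where
  mul f g := g.trans f
  one := Homeomorph.refl X
  inv := Homeomorph.symm
  mul_assoc _ _ _ := Homeomorph.ext fun _ => rfl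
  one_mul _ := Homeomorph.ext fun _ => rfl
  mul_one _ := Homeomorph.ext fun _ => rfl
  inv_mul_cancel f := Homeomorph.ext fun x => f.symm_apply_apply x

/-- A set is invariant under a group of homeomorphisms. -/
def InvariantUnder {X : Type*} [TopologicalSpace X] (G : Subgroup (X ≃ₜ X)) (Y : Set X) : Prop :=
  ∀ g ∈ G, ∀ y ∈ Y, g y ∈ Y

/-- Lengths of strictly increasing chains of nonempty closed invariant sets ending at `univ`. -/
def heightSet {X : Type*} [TopologicalSpace X] (G : Subgroup (X ≃ₜ X)) : Set ℕ :=
  {n | ∃ Y : Fin (n + 1) → Set X,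
    StrictMono Y ∧ (∀ i, (Y i).Nonempty ∧ IsClosed (Y i) ∧ InvariantUnder G (Y i)) ∧
    Y (Fin.last n) = Set.univ}

/-- The height of a transformation group. -/
def height {X : Type*} [TopologicalSpace X] (G : Subgroup (X ≃ₜ X)) : ℕ∞ :=
  sSup ((fun n : ℕ => (n : ℕ∞)) '' heightSet G)

/-- The set of achievable heights on phase space `X`. -/
def PH (X : Type*) [TopologicalSpace X] : Set ℕ∞ :=
  {h | ∃ G : Subgroup (X ≃ₜ X), height G = h}

end
noncomputable section

/-- A presentation of a topological graph: a finite union of arcs, any two of which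
meet in at most their endpoints. -/
structure GraphStruct (X : Type*) [TopologicalSpace X] where
  numEdges : ℕ
  edge : Fin numEdges → unitInterval → X
  cont : ∀ i, Continuous (edge i)
  inj : ∀ i, Function.Injective (edge i)
  cover : ∀ x : X, ∃ i t, edge i t = x
  meet : ∀ i j, i ≠ j → ∀ s t, edge i s = edge j t → (s = 0 ∨ s = 1) ∧ (t = 0 ∨ t = 1)

/-- The vertices: endpoints of the arcs. -/
def GraphStruct.vertexSet {X : Type*} [TopologicalSpace X] (G : GraphStruct X) : Set X :=
  {v | ∃ i, G.edge i 0 = v ∨ G.edge i 1 = v}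

/-- The degree of a point: the number of edge-ends at it. -/
def GraphStruct.degree {X : Type*} [TopologicalSpace X] (G : GraphStruct X) (v : X) : ℕ :=
  Set.ncard {p : Fin G.numEdges × Bool | G.edge p.1 (if p.2 then 1 else 0) = v}

/-- The (closed) edges, as subsets of `X`. -/
def GraphStruct.edgeSet {X : Type*} [TopologicalSpace X] (G : GraphStruct X) : Set (Set X) :=
  Set.range fun i => Set.range (G.edge i)

end

/-!
If `Φ : X → ℕ` is lower semicontinuous with range `{0, …, n}` and its level sets are the orbits of
the homeomorphisms preserving `Φ`, then a nonempty closed invariant set is determined by the labels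
it contains, and the sublevel sets form a longest chain, so this group has height `n`. On the circle
the constant label gives height `0`. For height `n + 1`, regard the circle as `ℝ ∪ {∞}`, fix `∞`,
and label the orbits of the homeomorphisms of `ℝ` preserving `{1, …, n}`, points before intervals.
The trivial group has height `∞`.

The degree of a vertex is a topological invariant of the point: the number of arcs in a star-shaped
neighbourhood of it. Hence the points where this number is not `2`, which are vertices, form a
finite invariant set, and a minimal action on an infinite space forces this set to be empty.

If all degrees are `2`, walking along the edges without ever turning back is a bijection on oriented
edges. The walk starting at an oriented edge is periodic, and it never meets the reverse of an edge
it has used, since that would force it to turn back somewhere in between. Its image is a union of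
edges which no other edge touches, so by connectedness it is all of `X`.
-/

section Heights

variable {X Y : Type*} [TopologicalSpace X] [TopologicalSpace Y]

/-- The homeomorphisms of `X` that preserve a labelling `Φ` of its points. -/
def labelGroup {α : Type*} (Φ : X → α) : Subgroup (X ≃ₜ X) where
  carrier := {g | ∀ x, Φ (g x) = Φ x}
  one_mem' _ := rfl
  mul_mem' {_ g} hf hg x := (hf (g x)).trans (hg x)
  inv_mem' {g} hg x := (hg (g.symm x)).symm.trans (congrArg Φ (g.apply_symm_apply x))

theorem InvariantUnder.apply_mem_iff {H : Subgroup (X ≃ₜ X)} {S : Set X} (hS : InvariantUnder H S)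
    {g : X ≃ₜ X} (hg : g ∈ H) {x : X} : g x ∈ S ↔ x ∈ S :=
  ⟨fun h => g.symm_apply_apply x ▸ hS g⁻¹ (H.inv_mem hg) _ h, hS g hg x⟩

theorem mem_heightSet_of_lowerSemicontinuous {H : Subgroup (X ≃ₜ X)} {Φ : X → ℕ} {n : ℕ}
    (hrange : range Φ = Iic n) (hΦ : LowerSemicontinuous Φ) (hH : H ≤ labelGroup Φ) :
    n ∈ heightSet H := by
  have hmem : ∀ i ≤ n, ∃ x, Φ x = i := fun i hi => hrange.ge (mem_Iic.2 hi)
  refine ⟨fun i => Φ ⁻¹' Iic (i : ℕ), fun i j hij => ⟨fun x hx => ?_, fun hsub => ?_⟩,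
    fun i => ⟨?_, hΦ.isClosed_preimage _, fun g hg x hx => ?_⟩, ?_⟩
  · exact le_trans (show Φ x ≤ i from hx) hij.le
  · obtain ⟨x, hx⟩ := hmem j (Nat.lt_succ_iff.1 j.2)
    exact absurd (hx ▸ mem_Iic.1 (hsub (mem_Iic.2 hx.le)) : (j : ℕ) ≤ i) hij.not_ge
  · obtain ⟨x, hx⟩ := hmem 0 n.zero_le
    exact ⟨x, mem_Iic.2 (hx ▸ Nat.zero_le _)⟩
  · exact mem_Iic.2 ((hH hg x).le.trans hx)
  · exact eq_univ_of_forall fun x => hrange.le ⟨x, rfl⟩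

theorem natCast_le_height {H : Subgroup (X ≃ₜ X)} {n : ℕ} (hn : n ∈ heightSet H) :
    (n : ℕ∞) ≤ height H :=
  le_sSup (mem_image_of_mem _ hn)

theorem add_one_le_ncard_of_strictMono {α : Type*} {n : ℕ} {C : Fin (n + 1) → Set α}
    (hC : StrictMono C) (hne : (C 0).Nonempty) (hfin : ∀ i, (C i).Finite) (i : Fin (n + 1)) :
    (i : ℕ) + 1 ≤ (C i).ncard := by
  induction i using Fin.induction with
  | zero => exact (ncard_pos (hfin 0)).2 hne
  | succ i ih => exact ih.trans_lt (ncard_lt_ncard (hC i.castSucc_lt_succ) (hfin _))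

theorem le_of_mem_heightSet {H : Subgroup (X ≃ₜ X)} {Φ : X → ℕ} {n m : ℕ}
    (hrange : range Φ ⊆ Iic n) (hH : ∀ x y, Φ x = Φ y → ∃ g ∈ H, g x = y)
    (hm : m ∈ heightSet H) : m ≤ n := by
  obtain ⟨Y, hmono, hY, -⟩ := hm
  have hpre : ∀ i, Φ ⁻¹' (Φ '' Y i) = Y i := fun i => by
    refine Subset.antisymm ?_ (subset_preimage_image _ _)
    rintro x ⟨y, hy, hyx⟩
    obtain ⟨g, hg, rfl⟩ := hH y x hyx
    exact (hY i).2.2 g hg y hy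
  have hmonoΦ : StrictMono fun i => Φ '' Y i := Monotone.strictMono_of_injective
    (fun i j hij => image_mono (hmono.monotone hij))
    fun i j hij => hmono.injective (by rw [← hpre i, ← hpre j, show Φ '' Y i = Φ '' Y j from hij])
  have hsub : ∀ i, Φ '' Y i ⊆ Iic n := fun i => (image_subset_range _ _).trans hrange
  have hcard := add_one_le_ncard_of_strictMono hmonoΦ ((hY 0).1.image Φ)
    (fun i => (finite_Iic n).subset (hsub i)) (Fin.last m)
  have hle := ncard_le_ncard (hsub (Fin.last m)) (finite_Iic n)
  simp only [ncard_eq_toFinset_card', toFinset_Iic, Nat.card_Iic, Fin.val_last] at hcard hle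
  omega

/-- `Φ` labels the orbits of `labelGroup Φ` by `0, …, n`, in such a way that the orbits with small
labels form closed sets. -/
structure IsOrbitLabel (Φ : X → ℕ) (n : ℕ) : Prop where
  range_eq : range Φ = Iic n
  lowerSemicontinuous : LowerSemicontinuous Φ
  exists_mem_labelGroup : ∀ x y, Φ x = Φ y → ∃ g ∈ labelGroup Φ, g x = y

namespace IsOrbitLabel

variable {Φ : X → ℕ} {n : ℕ}

theorem height_labelGroup (h : IsOrbitLabel Φ n) : height (labelGroup Φ) = n := by
  refine le_antisymm (sSup_le ?_) (natCast_le_height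
    (mem_heightSet_of_lowerSemicontinuous h.range_eq h.lowerSemicontinuous le_rfl))
  rintro _ ⟨m, hm, rfl⟩
  exact Nat.cast_le.2 (le_of_mem_heightSet h.range_eq.le h.exists_mem_labelGroup hm)

theorem natCast_mem_PH (h : IsOrbitLabel Φ n) : (n : ℕ∞) ∈ PH X :=
  ⟨labelGroup Φ, h.height_labelGroup⟩

theorem comp (h : IsOrbitLabel Φ n) (e : Y ≃ₜ X) : IsOrbitLabel (Φ ∘ e) n where
  range_eq := e.surjective.range_comp Φ ▸ h.range_eq
  lowerSemicontinuous := h.lowerSemicontinuous.comp e.continuous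
  exists_mem_labelGroup x y hxy := by
    obtain ⟨g, hg, hgx⟩ := h.exists_mem_labelGroup (e x) (e y) hxy
    refine ⟨(e.trans g).trans e.symm, fun z => ?_, ?_⟩
    · simpa using hg (e z)
    · simp [hgx]

theorem onePoint (h : IsOrbitLabel Φ n) :
    IsOrbitLabel (fun z : OnePoint X => z.elim 0 fun x => Φ x + 1) (n + 1) where
  range_eq := by
    ext m
    constructor
    · rintro ⟨z, rfl⟩
      induction z with
      | infty => exact mem_Iic.2 (Nat.zero_le _)
      | coe x => exact mem_Iic.2 (Nat.succ_le_succ (h.range_eq.le ⟨x, rfl⟩))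
    · intro hm
      obtain _ | m := m
      · exact ⟨OnePoint.infty, rfl⟩
      · obtain ⟨x, rfl⟩ := h.range_eq.ge (Nat.le_of_succ_le_succ hm : m ∈ Iic n)
        exact ⟨x, rfl⟩
  lowerSemicontinuous z m hm := by
    induction z with
    | infty => exact absurd hm (Nat.not_lt_zero m)
    | coe x =>
      rw [OnePoint.nhds_coe_eq, Filter.eventually_map]
      obtain _ | m := m
      · exact Filter.Eventually.of_forall fun y => (Φ y).succ_pos
      · exact (h.lowerSemicontinuous x m (Nat.lt_of_succ_lt_succ hm)).mono
          fun y => Nat.succ_lt_succ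
  exists_mem_labelGroup x y hxy := by
    induction x <;> induction y
    · exact ⟨1, one_mem _, rfl⟩
    · simp at hxy
    · simp at hxy
    case coe.coe x y =>
      obtain ⟨g, hg, hgx⟩ := h.exists_mem_labelGroup x y (Nat.succ_injective hxy)
      refine ⟨g.onePointCongr, fun z => ?_, congrArg _ hgx⟩
      induction z with
      | infty => rfl
      | coe z => exact congrArg Nat.succ (hg z)

end IsOrbitLabel

theorem height_bot [T1Space X] [Infinite X] : height (⊥ : Subgroup (X ≃ₜ X)) = ⊤ := by
  refine ENat.eq_top_iff_forall_ge.2 fun n => natCast_le_height ?_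
  let u := Infinite.natEmbedding X
  let Φ : X → ℕ := fun x => min n (Function.extend u id (fun _ => n) x)
  refine mem_heightSet_of_lowerSemicontinuous (Φ := Φ) ?_ ?_ bot_le
  · refine Subset.antisymm (range_subset_iff.2 fun x => mem_Iic.2 (min_le_left _ _))
      fun m hm => ⟨u m, ?_⟩
    simpa only [Φ, u.injective.extend_apply, id] using min_eq_right (mem_Iic.1 hm)
  · refine lowerSemicontinuous_iff_isClosed_preimage.2 fun m => ?_
    rcases le_or_gt n m with hnm | hmn
    · exact (eq_univ_of_forall fun x => mem_Iic.2 ((min_le_left _ _).trans hnm) :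
        Φ ⁻¹' Iic m = univ) ▸ isClosed_univ
    · refine (((finite_Iic m).image u).subset fun x hx => ?_).isClosed
      rw [mem_preimage, mem_Iic, min_le_iff, or_iff_right hmn.not_ge] at hx
      by_cases hxu : ∃ i, u i = x
      · obtain ⟨i, rfl⟩ := hxu
        exact ⟨i, by rwa [u.injective.extend_apply] at hx, rfl⟩
      · rw [Function.extend_apply' _ _ _ hxu] at hx
        exact absurd hx hmn.not_ge

theorem eq_univ_of_height_eq_zero {H : Subgroup (X ≃ₜ X)} (hH : height H = 0) {S : Set X}
    (hclosed : IsClosed S) (hinv : InvariantUnder H S) (hne : S.Nonempty) : S = univ := by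
  by_contra hS
  obtain ⟨x, hx⟩ := hne
  obtain ⟨y, hy⟩ := (ne_univ_iff_exists_notMem S).1 hS
  have hone : 1 ∈ heightSet H := by
    refine mem_heightSet_of_lowerSemicontinuous (Φ := indicator Sᶜ fun _ => 1) ?_
      (hclosed.isOpen_compl.lowerSemicontinuous_indicator zero_le_one) fun g hg z => ?_
    · refine Subset.antisymm (range_subset_iff.2 fun z => ?_) fun m hm => ?_
      · exact mem_Iic.2 (indicator_le_self Sᶜ (fun _ => 1) z)
      · obtain rfl | rfl := Nat.le_one_iff_eq_zero_or_eq_one.1 (mem_Iic.1 hm)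
        · exact ⟨x, indicator_of_notMem (not_not.2 hx) _⟩
        · exact ⟨y, indicator_of_mem hy _⟩
    · classical simp only [indicator_apply, mem_compl_iff, hinv.apply_mem_iff hg]
  simpa [hH] using natCast_le_height hone

end Heights

section RealLine

theorem exists_orderIso_real_apply_eq_of_le {a b x y : ℝ} (hx : x ∈ Ioo a b) (hy : y ∈ Ioo a b)
    (hxy : x ≤ y) : ∃ g : ℝ ≃o ℝ, g x = y ∧ ∀ t ∉ Ioo a b, g t = t := by
  obtain ⟨hax, hxb⟩ := hx
  obtain ⟨-, hyb⟩ := hy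
  set c := (y - a) / (x - a)
  set d := (b - y) / (b - x)
  have hc : 1 ≤ c := (one_le_div (by linarith)).2 (by linarith)
  have hd : d ≤ 1 := (div_le_one (by linarith)).2 (by linarith)
  have hd0 : 0 < d := div_pos (by linarith) (by linarith)
  have hcx : (x - a) * c = y - a := mul_div_cancel₀ _ (by linarith)
  have hdx : (b - x) * d = b - y := mul_div_cancel₀ _ (by linarith)
  let f : ℝ → ℝ := fun t => max t (min (a + (t - a) * c) (b - (b - t) * d))
  have hmono : StrictMono f := fun s t hst =>
    max_lt_max hst (min_lt_min (by nlinarith) (by nlinarith))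
  have hfix : ∀ t ∉ Ioo a b, f t = t := fun t ht => max_eq_left <| min_le_iff.2 <| by
    rcases le_or_gt t a with hta | hat
    · left; nlinarith
    · have hbt : b ≤ t := le_of_not_gt fun htb => ht ⟨hat, htb⟩
      right; nlinarith
  have hsurj : f.Surjective := by
    refine Continuous.surjective (by fun_prop) (Filter.tendsto_atTop_mono
      (fun t => le_max_left t _) Filter.tendsto_id) (Filter.tendsto_id.congr' ?_)
    filter_upwards [Filter.Iic_mem_atBot a] with t ht
    exact (hfix t fun h => h.1.not_ge ht).symm
  refine ⟨hmono.orderIsoOfSurjective f hsurj, ?_, hfix⟩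
  simp only [StrictMono.coe_orderIsoOfSurjective, f, hcx, hdx]
  simpa using hxy

theorem exists_homeomorph_real_apply_eq {a b x y : ℝ} (hx : x ∈ Ioo a b) (hy : y ∈ Ioo a b) :
    ∃ g : ℝ ≃ₜ ℝ, g x = y ∧ ∀ t ∉ Ioo a b, g t = t := by
  rcases le_total x y with hxy | hyx
  · obtain ⟨g, hg, hfix⟩ := exists_orderIso_real_apply_eq_of_le hx hy hxy
    exact ⟨g.toHomeomorph, hg, hfix⟩
  · obtain ⟨g, hg, hfix⟩ := exists_orderIso_real_apply_eq_of_le hy hx hyx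
    exact ⟨g.symm.toHomeomorph, g.symm_apply_eq.2 hg.symm,
      fun t ht => g.symm_apply_eq.2 (hfix t ht).symm⟩

theorem exists_mem_labelGroup_of_eqOn_Ioo {α : Type*} {Φ : ℝ → α} {a b x y : ℝ}
    (hΦ : ∀ s ∈ Ioo a b, ∀ t ∈ Ioo a b, Φ s = Φ t) (hx : x ∈ Ioo a b) (hy : y ∈ Ioo a b) :
    ∃ g ∈ labelGroup Φ, g x = y := by
  obtain ⟨g, hg, hfix⟩ := exists_homeomorph_real_apply_eq hx hy
  refine ⟨g, fun t => ?_, hg⟩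
  by_cases ht : t ∈ Ioo a b
  · refine hΦ _ (not_not.1 fun hgt => hgt ?_) _ ht
    rwa [g.injective (hfix _ hgt)]
  · rw [hfix t ht]

/-- The index of the cell of `x` in the decomposition of `ℝ` into integer points and the open
intervals between them: the point `k` has index `2 * k`, the interval `(k, k + 1)` has index
`2 * k + 1`. -/
noncomputable def cellIndex (x : ℝ) : ℤ := ⌊x⌋ + ⌈x⌉

theorem two_mul_lt_cellIndex_iff {k : ℤ} {x : ℝ} : 2 * k < cellIndex x ↔ (k : ℝ) < x := by
  have h₁ := Int.ceil_le_floor_add_one x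
  have h₂ := Int.floor_le_ceil x
  rw [← Int.lt_ceil, cellIndex]
  omega

theorem cellIndex_lt_two_mul_iff {k : ℤ} {x : ℝ} : cellIndex x < 2 * k ↔ x < k := by
  have h₁ := Int.ceil_le_floor_add_one x
  have h₂ := Int.floor_le_ceil x
  rw [← Int.floor_lt, cellIndex]
  omega

theorem cellIndex_eq_two_mul_iff {k : ℤ} {x : ℝ} : cellIndex x = 2 * k ↔ x = k := by
  rw [le_antisymm_iff, le_antisymm_iff, ← not_lt, ← not_lt, ← not_lt, ← not_lt,
    two_mul_lt_cellIndex_iff, cellIndex_lt_two_mul_iff]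

theorem cellIndex_eq_two_mul_add_one_iff {k : ℤ} {x : ℝ} :
    cellIndex x = 2 * k + 1 ↔ x ∈ Ioo (k : ℝ) (k + 1) := by
  rw [mem_Ioo, ← two_mul_lt_cellIndex_iff,
    show (k : ℝ) + 1 = ((k + 1 : ℤ) : ℝ) by push_cast; rfl, ← cellIndex_lt_two_mul_iff]
  omega

theorem cellIndex_div_two (m : ℤ) : cellIndex (m / 2) = m := by
  obtain ⟨k, rfl | rfl⟩ := Int.even_or_odd' m
  · exact cellIndex_eq_two_mul_iff.2 (by push_cast; ring)
  · rw [cellIndex_eq_two_mul_add_one_iff]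
    push_cast
    constructor <;> linarith

theorem cellIndex_intCast_sub (k : ℤ) (x : ℝ) : cellIndex (k - x) = 2 * k - cellIndex x := by
  rw [cellIndex, sub_eq_add_neg, Int.floor_intCast_add, Int.ceil_intCast_add, Int.floor_neg,
    Int.ceil_neg, cellIndex]
  ring

theorem eventually_cellIndex_eq_or_even (x : ℝ) : ∀ᶠ y in 𝓝 x,
    cellIndex y = cellIndex x ∨ 2 ∣ cellIndex x ∧ |cellIndex y - cellIndex x| ≤ 1 := by
  filter_upwards [lt_mem_nhds (Int.ceil_lt_add_one x |> sub_lt_iff_lt_add.2),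
    gt_mem_nhds (Int.lt_floor_add_one x)] with y hlt hgt
  have hceil : ⌈x⌉ - 1 < ⌈y⌉ := Int.lt_ceil.2 (by push_cast; exact hlt)
  have hfloor : ⌊y⌋ < ⌊x⌋ + 1 := Int.floor_lt.2 (by push_cast; exact hgt)
  have hx := Int.ceil_le_floor_add_one x
  have hx' := Int.floor_le_ceil x
  have hy := Int.ceil_le_floor_add_one y
  rw [abs_le]
  simp only [cellIndex]
  omega

/-- The orbits of the homeomorphisms of `ℝ` that map `{1, …, n}` onto itself, numbered from the
outside in: the unbounded cells of `ℝ \ {1, …, n}` get `0`, the points `1` and `n` get `1`, the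
cells adjacent to them get `2`, and so on. The formula uses that `x ↦ n + 1 - x` reflects the cell
indices about `n + 1`; truncated subtraction merges all the outer cells. -/
noncomputable def realStratum (n : ℕ) (x : ℝ) : ℕ := n - (cellIndex x - (n + 1)).natAbs

theorem realStratum_le (n : ℕ) (x : ℝ) : realStratum n x ≤ n := Nat.sub_le _ _

theorem exists_realStratum_eq {n r : ℕ} (hr : r ≤ n) : ∃ x, realStratum n x = r := by
  refine ⟨((r + 1 : ℤ) : ℝ) / 2, ?_⟩
  rw [realStratum, cellIndex_div_two]
  omega

theorem eventually_realStratum_eq_or_odd (n : ℕ) (x : ℝ) : ∀ᶠ y in 𝓝 x,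
    realStratum n y = realStratum n x ∨ realStratum n x % 2 = 1 ∧ realStratum n y % 2 = 0 := by
  filter_upwards [eventually_cellIndex_eq_or_even x] with y hy
  rw [abs_le] at hy
  simp only [realStratum]
  omega

/-- The renumbering of `0, …, n` that puts the odd numbers before the even ones. -/
def oddFirst (n r : ℕ) : ℕ := if r % 2 = 1 then r / 2 else (n + 1) / 2 + r / 2

theorem oddFirst_le {n r : ℕ} (hr : r ≤ n) : oddFirst n r ≤ n := by
  unfold oddFirst
  split_ifs <;> omega

theorem oddFirst_inj {n r s : ℕ} (hr : r ≤ n) (hs : s ≤ n) (h : oddFirst n r = oddFirst n s) :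
    r = s := by
  unfold oddFirst at h
  split_ifs at h <;> omega

theorem exists_oddFirst_eq {n m : ℕ} (hm : m ≤ n) : ∃ r ≤ n, oddFirst n r = m := by
  by_cases hmn : m < (n + 1) / 2
  · exact ⟨2 * m + 1, by omega, by rw [oddFirst, if_pos] <;> omega⟩
  · exact ⟨2 * (m - (n + 1) / 2), by omega, by rw [oddFirst, if_neg] <;> omega⟩

theorem oddFirst_lt_of_odd_of_even {n r s : ℕ} (hrn : r ≤ n) (hr : r % 2 = 1) (hs : s % 2 = 0) :
    oddFirst n r < oddFirst n s := by
  rw [oddFirst, oddFirst, if_pos hr, if_neg] <;> omega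

/-- The numbering of the strata in which the points, which are the odd strata, come before the open
strata. -/
noncomputable def realLabel (n : ℕ) (x : ℝ) : ℕ := oddFirst n (realStratum n x)

theorem realLabel_eq_iff {n : ℕ} {x y : ℝ} :
    realLabel n x = realLabel n y ↔ realStratum n x = realStratum n y :=
  ⟨oddFirst_inj (realStratum_le n x) (realStratum_le n y), congrArg _⟩

theorem range_realLabel (n : ℕ) : range (realLabel n) = Iic n := by
  refine Subset.antisymm (range_subset_iff.2 fun x => oddFirst_le (realStratum_le n x))
    fun m hm => ?_
  obtain ⟨r, hr, rfl⟩ := exists_oddFirst_eq (mem_Iic.1 hm)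
  obtain ⟨x, rfl⟩ := exists_realStratum_eq hr
  exact ⟨x, rfl⟩

theorem lowerSemicontinuous_realLabel (n : ℕ) : LowerSemicontinuous (realLabel n) := by
  intro x m hm
  filter_upwards [eventually_realStratum_eq_or_odd n x] with y hy
  rcases hy with heq | ⟨hodd, heven⟩
  · exact hm.trans_eq (realLabel_eq_iff.2 heq.symm)
  · exact hm.trans (oddFirst_lt_of_odd_of_even (realStratum_le n x) hodd heven)

theorem reflection_mem_labelGroup_realLabel (n : ℕ) :
    Homeomorph.subLeft ((n + 1 : ℤ) : ℝ) ∈ labelGroup (realLabel n) := fun x => by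
  rw [Homeomorph.coe_subLeft, realLabel_eq_iff, realStratum, realStratum, cellIndex_intCast_sub]
  omega

theorem exists_mem_labelGroup_realLabel_lt_cellIndex (n : ℕ) (x : ℝ) :
    ∃ g ∈ labelGroup (realLabel n), n < cellIndex (g x) := by
  by_cases hx : n < cellIndex x
  · exact ⟨1, one_mem _, hx⟩
  · refine ⟨_, reflection_mem_labelGroup_realLabel n, ?_⟩
    rw [Homeomorph.coe_subLeft, cellIndex_intCast_sub]
    omega

theorem exists_mem_labelGroup_realLabel_of_lt_cellIndex {n : ℕ} {x y : ℝ}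
    (hx : n < cellIndex x) (hy : n < cellIndex y) (hxy : realLabel n x = realLabel n y) :
    ∃ g ∈ labelGroup (realLabel n), g x = y := by
  have hcell : cellIndex x = cellIndex y ∨
      2 * (n : ℤ) < cellIndex x ∧ 2 * (n : ℤ) < cellIndex y := by
    rw [realLabel_eq_iff, realStratum, realStratum] at hxy
    omega
  rcases hcell with heq | ⟨hnx, hny⟩
  · obtain ⟨k, hk | hk⟩ := Int.even_or_odd' (cellIndex y)
    · refine ⟨1, one_mem _, ?_⟩
      exact (cellIndex_eq_two_mul_iff.1 (heq.trans hk)).trans (cellIndex_eq_two_mul_iff.1 hk).symm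
    · refine exists_mem_labelGroup_of_eqOn_Ioo (fun s hs t ht => ?_)
        (cellIndex_eq_two_mul_add_one_iff.1 (heq.trans hk)) (cellIndex_eq_two_mul_add_one_iff.1 hk)
      rw [realLabel_eq_iff, realStratum, realStratum, cellIndex_eq_two_mul_add_one_iff.2 hs,
        cellIndex_eq_two_mul_add_one_iff.2 ht]
  · have hout : ∀ s ∈ Ioo ((n : ℤ) : ℝ) (max x y + 1), realStratum n s = 0 := fun s hs => by
      have := two_mul_lt_cellIndex_iff.2 hs.1
      rw [realStratum]
      omega
    refine exists_mem_labelGroup_of_eqOn_Ioo (a := (n : ℤ)) (b := max x y + 1)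
      (fun s hs t ht => realLabel_eq_iff.2 ((hout s hs).trans (hout t ht).symm))
      ⟨two_mul_lt_cellIndex_iff.1 hnx, ?_⟩ ⟨two_mul_lt_cellIndex_iff.1 hny, ?_⟩
    · exact (le_max_left x y).trans_lt (lt_add_one _)
    · exact (le_max_right x y).trans_lt (lt_add_one _)

theorem isOrbitLabel_realLabel (n : ℕ) : IsOrbitLabel (realLabel n) n where
  range_eq := range_realLabel n
  lowerSemicontinuous := lowerSemicontinuous_realLabel n
  exists_mem_labelGroup x y hxy := by
    obtain ⟨f, hf, hfx⟩ := exists_mem_labelGroup_realLabel_lt_cellIndex n x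
    obtain ⟨g, hg, hgy⟩ := exists_mem_labelGroup_realLabel_lt_cellIndex n y
    obtain ⟨h, hh, hhx⟩ := exists_mem_labelGroup_realLabel_of_lt_cellIndex hfx hgy
      ((hf x).trans (hxy.trans (hg y).symm))
    refine ⟨g⁻¹ * (h * f), mul_mem (inv_mem hg) (mul_mem hh hf), ?_⟩
    exact g.symm_apply_eq.2 hhx

end RealLine

section Circle

/-- The circle as the line with a point at infinity, via stereographic projection from `1`. -/
noncomputable def onePointRealHomeoCircle : OnePoint ℝ ≃ₜ Circle :=
  have : Fact (Module.finrank ℝ ℂ = 1 + 1) := ⟨Complex.finrank_real_complex⟩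
  have hline : Module.finrank ℝ ℝ = Module.finrank ℝ (Submodule.span ℝ {(1 : ℂ)})ᗮ := by
    rw [Submodule.finrank_orthogonal_span_singleton (n := 1) one_ne_zero, Module.finrank_self]
  (ContinuousLinearEquiv.ofFinrankEq hline).toHomeomorph.onePointCongr.trans
    (onePointHyperplaneHomeoUnitSphere (norm_one (α := ℂ)))

theorem isOrbitLabel_circle_zero : IsOrbitLabel (fun _ : Circle => 0) 0 where
  range_eq := by rw [range_const, ← Nat.bot_eq_zero, Iic_bot]
  lowerSemicontinuous := continuous_const.lowerSemicontinuous
  exists_mem_labelGroup x y _ :=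
    ⟨Homeomorph.mulRight (x⁻¹ * y), fun _ => rfl, mul_inv_cancel_left x y⟩

theorem natCast_mem_PH_of_homeomorph_circle {X : Type*} [TopologicalSpace X] (e : X ≃ₜ Circle) :
    ∀ n : ℕ, (n : ℕ∞) ∈ PH X
  | 0 => (isOrbitLabel_circle_zero.comp e).natCast_mem_PH
  | n + 1 => ((isOrbitLabel_realLabel n).onePoint.comp
      (e.trans onePointRealHomeoCircle.symm)).natCast_mem_PH

theorem PH_eq_univ_of_homeomorph_circle {X : Type*} [TopologicalSpace X] (e : X ≃ₜ Circle) :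
    PH X = univ := by
  have : T1Space X := e.symm.t1Space
  have : Infinite X :=
    Infinite.of_injective (e.symm ∘ onePointRealHomeoCircle ∘ OnePoint.some)
      (e.symm.injective.comp (onePointRealHomeoCircle.injective.comp OnePoint.coe_injective))
  refine eq_univ_of_forall fun h => ?_
  induction h using ENat.recTopCoe with
  | top => exact ⟨⊥, height_bot⟩
  | coe n => exact natCast_mem_PH_of_homeomorph_circle e n

end Circle

section Star

variable {X Y ι κ : Type*} [TopologicalSpace X] [TopologicalSpace Y]

/-- The arcs `r i` start at `x`, are disjoint away from `x`, and fill a neighbourhood of `x`. -/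
structure IsStar (r : ι → I → X) (x : X) : Prop where
  continuous : ∀ i, Continuous (r i)
  injective : ∀ i, (r i).Injective
  apply_zero : ∀ i, r i 0 = x
  eq_zero_of_apply_eq : ∀ {i j s t}, i ≠ j → r i s = r j t → s = 0
  iUnion_range_mem_nhds : ⋃ i, range (r i) ∈ 𝓝 x

theorem exists_pos_Icc_subset_of_mem_nhds_zero {S : Set I} (hS : S ∈ 𝓝 0) :
    ∃ e : I, 0 < e ∧ Icc 0 e ⊆ S := by
  obtain ⟨u, hu, hsub⟩ := nhds_bot_basis.mem_iff.1 hS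
  obtain ⟨e, he, heu⟩ := exists_between hu
  exact ⟨e, he, fun t ht => hsub (ht.2.trans_lt heu)⟩

namespace IsStar

variable {r : ι → I → X} {x : X}

theorem comp_equiv (h : IsStar r x) (e : κ ≃ ι) : IsStar (fun i => r (e i)) x where
  continuous i := h.continuous (e i)
  injective i := h.injective (e i)
  apply_zero i := h.apply_zero (e i)
  eq_zero_of_apply_eq hij := h.eq_zero_of_apply_eq (e.injective.ne hij)
  iUnion_range_mem_nhds :=
    (e.surjective.iUnion_comp fun i => range (r i)).symm ▸ h.iUnion_range_mem_nhds

theorem map (h : IsStar r x) (g : X ≃ₜ Y) : IsStar (fun i => g ∘ r i) (g x) where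
  continuous i := g.continuous.comp (h.continuous i)
  injective i := g.injective.comp (h.injective i)
  apply_zero i := congrArg g (h.apply_zero i)
  eq_zero_of_apply_eq hij hst := h.eq_zero_of_apply_eq hij (g.injective hst)
  iUnion_range_mem_nhds := by
    simp only [range_comp, ← image_iUnion]
    exact g.isOpenMap.image_mem_nhds h.iUnion_range_mem_nhds

theorem eq_zero_of_apply_eq_center (h : IsStar r x) {i : ι} {s : I} (hs : r i s = x) : s = 0 :=
  h.injective i (hs.trans (h.apply_zero i).symm)

variable [T2Space X]

theorem subset_range_of_isPreconnected [Finite ι] (h : IsStar r x) {S : Set X}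
    (hS : IsPreconnected S) (hsub : S ⊆ ⋃ i, range (r i)) (hx : x ∉ S) (hne : S.Nonempty) :
    ∃ i, S ⊆ range (r i) := by
  obtain ⟨y, hy⟩ := hne
  obtain ⟨i, hi⟩ := mem_iUnion.1 (hsub hy)
  have hclosed : ∀ j, IsClosed (range (r j)) := fun j => (isCompact_range (h.continuous j)).isClosed
  have hrest : IsClosed (⋃ j : {j // j ≠ i}, range (r j)) :=
    isClosed_iUnion_of_finite fun j => hclosed j
  have hdisj : ∀ z ∈ S, z ∈ range (r i) → z ∉ ⋃ j : {j // j ≠ i}, range (r j) := by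
    rintro _ hz ⟨s, rfl⟩ hj
    obtain ⟨⟨j, hj⟩, t, ht⟩ := mem_iUnion.1 hj
    obtain rfl : s = 0 := h.eq_zero_of_apply_eq hj.symm ht.symm
    exact hx (h.apply_zero i ▸ hz)
  have hcover : S ⊆ range (r i) ∪ ⋃ j : {j // j ≠ i}, range (r j) := fun z hz => by
    obtain ⟨j, hj⟩ := mem_iUnion.1 (hsub hz)
    by_cases hji : j = i
    · exact Or.inl (hji ▸ hj)
    · exact Or.inr (mem_iUnion.2 ⟨⟨j, hji⟩, hj⟩)
  have hor := isPreconnected_iff_subset_of_disjoint_closed.1 hS _ _ (hclosed i) hrest hcover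
    (eq_empty_iff_forall_notMem.2 fun z hz => hdisj z hz.1 hz.2.1 hz.2.2)
  exact ⟨i, hor.resolve_right fun hrest => hdisj y hy hi (hrest hy)⟩

theorem exists_image_Icc_subset_range [Finite ι] (h : IsStar r x) {a : I → X} (ha : Continuous a)
    (hinj : a.Injective) (ha0 : a 0 = x) : ∃ i, ∃ e > 0, a '' Icc 0 e ⊆ range (r i) := by
  obtain ⟨e, he, hsub⟩ := exists_pos_Icc_subset_of_mem_nhds_zero
    (ha.continuousAt.preimage_mem_nhds (ha0.symm ▸ h.iUnion_range_mem_nhds))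
  have hx : x ∉ a '' Ioc 0 e := by
    rintro ⟨t, ht, htx⟩
    exact ht.1.ne' (hinj (htx.trans ha0.symm))
  obtain ⟨i, hi⟩ := h.subset_range_of_isPreconnected (isPreconnected_Ioc.image a ha.continuousOn)
    (image_subset_iff.2 (Ioc_subset_Icc_self.trans hsub)) hx ((nonempty_Ioc.2 he).image a)
  refine ⟨i, e, he, ?_⟩
  rw [← Ioc_insert_left he.le, image_insert_eq, ha0]
  exact insert_subset ⟨0, h.apply_zero i⟩ hi

theorem exists_image_Icc_subset_range_arc [Finite ι] (h : IsStar r x) {a : I → X}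
    (ha : Continuous a) (hinj : a.Injective) (ha0 : a 0 = x) :
    ∃ i, ∃ b > 0, r i '' Icc 0 b ⊆ range a := by
  obtain ⟨i, e, he, hsub⟩ := h.exists_image_Icc_subset_range ha hinj ha0
  obtain ⟨b, hb⟩ := hsub (mem_image_of_mem a (right_mem_Icc.2 he.le))
  have hpre : IsPreconnected (r i ⁻¹' (a '' Icc 0 e)) :=
    (isPreconnected_Icc.image a ha.continuousOn).preimage_of_isClosedMap (h.injective i)
      (h.continuous i).isClosedMap hsub
  refine ⟨i, b, pos_iff_ne_zero.2 fun hb0 => ?_, ?_⟩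
  · rw [hb0, h.apply_zero, ← ha0] at hb
    exact he.ne (hinj hb)
  · refine (image_subset_iff.2 (hpre.Icc_subset ?_ ?_)).trans (image_subset_range a _)
    · exact ⟨0, left_mem_Icc.2 he.le, ha0.trans (h.apply_zero i).symm⟩
    · exact ⟨e, right_mem_Icc.2 he.le, hb.symm⟩

theorem card_le [Finite κ] (h : IsStar r x) {r' : κ → I → X} (h' : IsStar r' x) :
    Nat.card ι ≤ Nat.card κ := by
  choose p b hb hsub using fun i =>
    h'.exists_image_Icc_subset_range_arc (h.continuous i) (h.injective i) (h.apply_zero i)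
  refine Nat.card_le_card_of_injective p fun i j hij => by_contra fun hne => ?_
  have hmin : 0 < min (b i) (b j) := lt_min (hb i) (hb j)
  obtain ⟨s, hs⟩ := hsub i (mem_image_of_mem _ ⟨hmin.le, min_le_left _ _⟩)
  obtain ⟨t, ht⟩ := hsub j (mem_image_of_mem _ ⟨hmin.le, min_le_right _ _⟩)
  rw [← hij] at ht
  obtain rfl : s = 0 := h.eq_zero_of_apply_eq hne (hs.trans ht.symm)
  exact hmin.ne' (h'.eq_zero_of_apply_eq_center (hs.symm.trans (h.apply_zero i)))

end IsStar

/-- The point `x` has a neighbourhood consisting of `k` arcs that start at `x` and are disjoint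
otherwise: the topological counterpart of the degree. -/
def HasOrder (x : X) (k : ℕ) : Prop :=
  ∃ r : Fin k → I → X, IsStar r x

theorem IsStar.hasOrder [Finite ι] {r : ι → I → X} {x : X} (h : IsStar r x) :
    HasOrder x (Nat.card ι) :=
  ⟨_, h.comp_equiv (Finite.equivFin ι).symm⟩

theorem HasOrder.unique [T2Space X] {x : X} {k l : ℕ} (hk : HasOrder x k) (hl : HasOrder x l) :
    k = l := by
  obtain ⟨r, hr⟩ := hk
  obtain ⟨r', hr'⟩ := hl
  simpa using (hr.card_le hr').antisymm (hr'.card_le hr)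

theorem hasOrder_apply_iff (g : X ≃ₜ Y) {x : X} {k : ℕ} : HasOrder (g x) k ↔ HasOrder x k := by
  refine ⟨fun ⟨r, hr⟩ => ?_, fun ⟨r, hr⟩ => ⟨_, hr.map g⟩⟩
  exact ⟨_, g.symm_apply_apply x ▸ hr.map g.symm⟩

end Star

theorem exists_arc_mem_nhdsGE {t : I} (ht : t ≠ 1) : ∃ ρ : I → I, Continuous ρ ∧ ρ.Injective ∧
    ρ 0 = t ∧ (∀ s, t ≤ ρ s) ∧ (∀ s, ρ s ≠ 1) ∧ range ρ ∈ 𝓝[≥] t := by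
  obtain ⟨m, htm, hm1⟩ := exists_between (lt_of_le_of_ne unitInterval.le_one' ht)
  have hrange : range (Icc.convexComb t m) = Icc t m := by
    rw [Path.range_subpathAux, uIcc_of_le htm.le]
  refine ⟨Icc.convexComb t m, by fun_prop, fun r s hrs => ?_, Icc.convexComb_zero t m,
    fun s => (hrange.le ⟨s, rfl⟩).1, fun s => ((hrange.le ⟨s, rfl⟩).2.trans_lt hm1).ne,
    hrange.symm ▸ Icc_mem_nhdsGE htm⟩
  have hlt : (t : ℝ) < m := htm
  have := congrArg Subtype.val hrs
  rw [Icc.coe_convexComb, Icc.coe_convexComb] at this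
  exact Subtype.ext (by nlinarith)

namespace GraphStruct

variable {X : Type*} [TopologicalSpace X] (G : GraphStruct X)

/-- The edges of `G` with an orientation: `(i, false)` is edge `i` traversed from `0` to `1`, and
`(i, true)` is its reversal. -/
abbrev Dart : Type := Fin G.numEdges × Bool

variable {G}

/-- The parametrization of an oriented edge from its start to its end. -/
def dartMap (p : G.Dart) (t : I) : X := G.edge p.1 (if p.2 then σ t else t)

/-- The same edge with the opposite orientation. -/
def Dart.rev (p : G.Dart) : G.Dart := (p.1, !p.2)

theorem Dart.rev_rev (p : G.Dart) : p.rev.rev = p :=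
  Prod.ext rfl (Bool.not_not p.2)

theorem Dart.rev_ne (p : G.Dart) : p.rev ≠ p := fun h =>
  Bool.not_ne_self p.2 (congrArg Prod.snd h)

theorem dartMap_rev (p : G.Dart) (t : I) : dartMap p.rev t = dartMap p (σ t) := by
  obtain ⟨i, _ | _⟩ := p
  · rfl
  · simp [dartMap, Dart.rev]

theorem continuous_dartMap (p : G.Dart) : Continuous (dartMap p) := by
  refine (G.cont p.1).comp ?_
  split_ifs
  exacts [unitInterval.continuous_symm, continuous_id]

theorem dartMap_injective (p : G.Dart) : (dartMap p).Injective := by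
  obtain ⟨i, _ | _⟩ := p
  · exact G.inj i
  · exact (G.inj i).comp unitInterval.symm_bijective.injective

theorem eq_zero_of_dartMap_eq_of_ne {p q : G.Dart} {s t : I} (hpq : p.1 ≠ q.1)
    (hs : s ≠ 1) (h : dartMap p s = dartMap q t) : s = 0 := by
  have := (G.meet _ _ hpq _ _ h).1
  split_ifs at this <;> simpa [hs] using this

theorem eq_or_eq_rev_or_eq_zero_of_dartMap_eq {p q : G.Dart} {s t : I} (hs : s ≠ 1) (ht : t ≠ 1)
    (h : dartMap p s = dartMap q t) :
    (p = q ∧ s = t) ∨ (q = p.rev ∧ t = σ s) ∨ (s = 0 ∧ t = 0) := by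
  by_cases hpq : p.1 = q.1
  · obtain rfl | rfl : q = p ∨ q = p.rev := by
      obtain ⟨i, b⟩ := p
      obtain ⟨j, c⟩ := q
      obtain rfl : i = j := hpq
      cases b <;> cases c <;> simp [Dart.rev]
    · exact Or.inl ⟨rfl, dartMap_injective _ h⟩
    · rw [dartMap_rev] at h
      exact Or.inr (Or.inl ⟨rfl, by rw [dartMap_injective _ h, unitInterval.symm_symm]⟩)
  · exact Or.inr (Or.inr ⟨eq_zero_of_dartMap_eq_of_ne hpq hs h,
      eq_zero_of_dartMap_eq_of_ne (Ne.symm hpq) ht h.symm⟩)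

variable (G) in
theorem exists_dartMap_eq (x : X) : ∃ p : G.Dart, ∃ t ≠ 1, dartMap p t = x := by
  obtain ⟨i, t, rfl⟩ := G.cover x
  by_cases ht : t = 1
  · exact ⟨(i, true), 0, zero_ne_one, by simp [dartMap, ht]⟩
  · exact ⟨(i, false), t, ht, rfl⟩

theorem mem_vertexSet_iff {v : X} : v ∈ G.vertexSet ↔ ∃ p : G.Dart, dartMap p 0 = v := by
  simp [vertexSet, dartMap]

theorem dartMap_zero_mem_vertexSet (p : G.Dart) : dartMap p 0 ∈ G.vertexSet :=
  mem_vertexSet_iff.2 ⟨p, rfl⟩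

theorem degree_eq_ncard (v : X) : G.degree v = {p : G.Dart | dartMap p 0 = v}.ncard := by
  simp only [degree, dartMap, unitInterval.symm_zero]

variable (G) in
theorem finite_vertexSet : G.vertexSet.Finite :=
  (finite_range fun p : G.Dart => dartMap p 0).subset fun _ => mem_vertexSet_iff.1

section Order

/-- The oriented edges that pass through `x` or start at `x`, but do not end there. -/
def departing (G : GraphStruct X) (x : X) : Set G.Dart := {p | ∃ t ≠ 1, dartMap p t = x}

theorem ncard_departing_of_mem_vertexSet {v : X} (hv : v ∈ G.vertexSet) :
    (G.departing v).ncard = G.degree v := by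
  obtain ⟨q, rfl⟩ := mem_vertexSet_iff.1 hv
  rw [degree_eq_ncard]
  congr 1
  ext p
  refine ⟨?_, fun h => ⟨0, zero_ne_one, h⟩⟩
  rintro ⟨t, ht, h⟩
  rcases eq_or_eq_rev_or_eq_zero_of_dartMap_eq zero_ne_one ht h.symm with
    ⟨rfl, -⟩ | ⟨-, rfl⟩ | ⟨-, rfl⟩
  · rfl
  · exact absurd unitInterval.symm_zero ht
  · exact h

theorem ncard_departing_of_notMem_vertexSet {x : X} (hx : x ∉ G.vertexSet) :
    (G.departing x).ncard = 2 := by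
  obtain ⟨p, t, ht, rfl⟩ := G.exists_dartMap_eq x
  have ht0 : t ≠ 0 := fun h => hx (h ▸ dartMap_zero_mem_vertexSet p)
  suffices G.departing (dartMap p t) = {p, p.rev} by rw [this, ncard_pair p.rev_ne.symm]
  ext q
  constructor
  · rintro ⟨s, hs, h⟩
    rcases eq_or_eq_rev_or_eq_zero_of_dartMap_eq ht hs h.symm with ⟨rfl, -⟩ | ⟨rfl, -⟩ | ⟨h0, -⟩
    exacts [Or.inl rfl, Or.inr rfl, absurd h0 ht0]
  · rintro (rfl | rfl)
    · exact ⟨t, ht, rfl⟩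
    · exact ⟨σ t, mt unitInterval.symm_eq_one.1 ht0, by rw [dartMap_rev, unitInterval.symm_symm]⟩

variable [T2Space X]

variable (G) in
theorem mem_nhds_of_forall_preimage_mem_nhds {S : Set X} {x : X}
    (h : ∀ (p : G.Dart) (t : I), dartMap p t = x → dartMap p ⁻¹' S ∈ 𝓝 t) : S ∈ 𝓝 x := by
  have hcover : ⋃ p : G.Dart, range (dartMap p) = univ := eq_univ_of_forall fun y => by
    obtain ⟨p, t, -, ht⟩ := G.exists_dartMap_eq y
    exact mem_iUnion.2 ⟨p, t, ht⟩
  rw [← nhdsWithin_univ, ← hcover, nhdsWithin_iUnion, Filter.mem_iSup]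
  intro p
  have hemb := (continuous_dartMap p).isClosedEmbedding (dartMap_injective p)
  by_cases hx : x ∈ range (dartMap p)
  · obtain ⟨t, rfl⟩ := hx
    rw [← hemb.isEmbedding.map_nhds_eq]
    exact h p t rfl
  · rw [notMem_closure_iff_nhdsWithin_eq_bot.1 (hemb.isClosed_range.closure_eq.symm ▸ hx)]
    exact Filter.mem_bot

variable (G) in
theorem mem_nhds_of_forall_eventually_nhdsGE {S : Set X} {x : X}
    (h : ∀ (p : G.Dart), ∀ t ≠ 1, dartMap p t = x → ∀ᶠ u in 𝓝[≥] t, dartMap p u ∈ S) :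
    S ∈ 𝓝 x := by
  have hxS : x ∈ S := by
    obtain ⟨p, t, ht, rfl⟩ := G.exists_dartMap_eq x
    exact (h p t ht rfl).self_of_nhdsWithin self_mem_Ici
  have hright : ∀ (p : G.Dart) (t : I), dartMap p t = x → ∀ᶠ u in 𝓝[≥] t, dartMap p u ∈ S := by
    rintro p t rfl
    obtain rfl | ht := eq_or_ne t 1
    · filter_upwards [self_mem_nhdsWithin] with u hu
      rwa [unitInterval.le_one'.antisymm hu]
    · exact h p t ht rfl
  refine G.mem_nhds_of_forall_preimage_mem_nhds fun p t hpt => ?_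
  rw [← nhdsLE_sup_nhdsGE]
  refine Filter.mem_sup.2 ⟨?_, hright p t hpt⟩
  have hsymm : Filter.Tendsto σ (𝓝[≤] t) (𝓝[≥] σ t) :=
    unitInterval.continuous_symm.continuousWithinAt.tendsto_nhdsWithin
      fun u hu => unitInterval.symm_le_symm.2 hu
  filter_upwards [hsymm (hright p.rev (σ t) (by rwa [dartMap_rev, unitInterval.symm_symm]))]
    with u hu
  simpa [dartMap_rev] using hu

theorem hasOrder_ncard_departing (x : X) : HasOrder x (G.departing x).ncard := by
  choose τ hτ1 hτ using fun p : G.departing x => p.2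
  choose ρ hcont hinj h0 hge hne hnhds using fun p => exists_arc_mem_nhdsGE (hτ1 p)
  refine IsStar.hasOrder (ι := G.departing x) (r := fun p s => dartMap p.1 (ρ p s))
    ⟨fun p => (continuous_dartMap p.1).comp (hcont p),
      fun p => (dartMap_injective p.1).comp (hinj p), fun p => by rw [h0, hτ], ?_, ?_⟩
  · intro p q s t hpq hst
    suffices ρ p s ≤ τ p from hinj p ((this.antisymm (hge p s)).trans (h0 p).symm)
    rcases eq_or_eq_rev_or_eq_zero_of_dartMap_eq (hne p s) (hne q t) hst with
      ⟨h, -⟩ | ⟨h, ht⟩ | ⟨h0, -⟩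
    · exact absurd (Subtype.ext h) hpq
    · have hτq : τ q = σ (τ p) := dartMap_injective q.1 (by
        rw [hτ, h, dartMap_rev, unitInterval.symm_symm, hτ])
      have := hge q t
      rwa [ht, hτq, unitInterval.symm_le_symm] at this
    · exact h0 ▸ unitInterval.nonneg'
  · refine G.mem_nhds_of_forall_eventually_nhdsGE fun p t ht hpt => ?_
    let p' : G.departing x := ⟨p, t, ht, hpt⟩
    have hτt : τ p' = t := dartMap_injective p ((hτ p').trans hpt.symm)
    filter_upwards [hτt ▸ hnhds p']
    rintro _ ⟨s, rfl⟩
    exact mem_iUnion.2 ⟨p', s, rfl⟩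

theorem hasOrder_degree {v : X} (hv : v ∈ G.vertexSet) : HasOrder v (G.degree v) :=
  ncard_departing_of_mem_vertexSet hv ▸ hasOrder_ncard_departing v

theorem hasOrder_two_of_notMem_vertexSet {x : X} (hx : x ∉ G.vertexSet) : HasOrder x 2 :=
  ncard_departing_of_notMem_vertexSet hx ▸ hasOrder_ncard_departing x

theorem degree_eq_two_of_height_eq_zero {H : Subgroup (X ≃ₜ X)} (hH : height H = 0) {v : X}
    (hv : v ∈ G.vertexSet) : G.degree v = 2 := by
  by_contra hdeg
  let D : Set X := {x | ¬ HasOrder x 2}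
  have hfin : D.Finite := G.finite_vertexSet.subset fun x hx =>
    not_not.1 (mt hasOrder_two_of_notMem_vertexSet hx)
  have hinv : InvariantUnder H D := fun g _ x hx => mt (hasOrder_apply_iff g).1 hx
  have hvD : v ∈ D := fun h => hdeg ((hasOrder_degree hv).unique h)
  have huniv : D = univ := eq_univ_of_height_eq_zero hH hfin.isClosed hinv ⟨v, hvD⟩
  obtain ⟨p, -⟩ := mem_vertexSet_iff.1 hv
  have : Infinite I := Icc.infinite zero_lt_one
  have : Infinite X := .of_injective _ (dartMap_injective p)
  exact infinite_univ (huniv ▸ hfin)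

end Order

end GraphStruct

section Concat

variable {X : Type*}

/-- The concatenation of a bi-infinite sequence of paths, the `k`-th being run over `[k, k + 1]`. -/
noncomputable def concat (γ : ℤ → I → X) (x : ℝ) : X :=
  γ ⌊x⌋ ⟨Int.fract x, Int.fract_nonneg x, (Int.fract_lt_one x).le⟩

variable {γ : ℤ → I → X}

theorem exists_eq_intCast_add (x : ℝ) : ∃ (k : ℤ) (t : I), t ≠ 1 ∧ x = k + t :=
  ⟨⌊x⌋, ⟨Int.fract x, Int.fract_nonneg x, (Int.fract_lt_one x).le⟩,
    fun h => (Int.fract_lt_one x).ne (congrArg Subtype.val h), (Int.floor_add_fract x).symm⟩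

theorem concat_intCast_add_of_ne_one (γ : ℤ → I → X) (k : ℤ) {t : I} (ht : t ≠ 1) :
    concat γ (k + t) = γ k t := by
  have hfloor : ⌊(t : ℝ)⌋ = 0 :=
    Int.floor_eq_zero_iff.2 ⟨t.2.1, lt_of_le_of_ne t.2.2 fun h => ht (Subtype.ext h)⟩
  simp [concat, hfloor, Int.fract]

theorem concat_intCast_add (hγ : ∀ k, γ k 1 = γ (k + 1) 0) (k : ℤ) (t : I) :
    concat γ (k + t) = γ k t := by
  obtain rfl | ht := eq_or_ne t 1
  · simpa [hγ] using concat_intCast_add_of_ne_one γ (k + 1) zero_ne_one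
  · exact concat_intCast_add_of_ne_one γ k ht

theorem continuous_concat [TopologicalSpace X] (hγ : ∀ k, γ k 1 = γ (k + 1) 0)
    (hcont : ∀ k, Continuous (γ k)) : Continuous (concat γ) := by
  have hon : ∀ k : ℤ, ContinuousOn (concat γ) (Icc k (k + 1)) := fun k => by
    have hproj : Continuous fun x : ℝ => γ k (projIcc 0 1 zero_le_one (x - k)) :=
      (hcont k).comp (continuous_projIcc.comp (by fun_prop))
    refine hproj.continuousOn.congr fun x hx => ?_
    have hxk : x - k ∈ I := ⟨sub_nonneg.2 hx.1, by linarith [hx.2]⟩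
    beta_reduce
    rw [projIcc_of_mem zero_le_one hxk, ← concat_intCast_add hγ, add_sub_cancel]
  refine continuous_iff_continuousAt.2 fun x => continuousAt_iff_continuous_left_right.2 ⟨?_, ?_⟩
  · have hlt : ((⌈x⌉ - 1 : ℤ) : ℝ) < x := by
      push_cast
      linarith [Int.ceil_lt_add_one x]
    have hle : x ≤ (⌈x⌉ - 1 : ℤ) + 1 := by
      push_cast
      linarith [Int.le_ceil x]
    exact ((hon _) x ⟨hlt.le, hle⟩).mono_of_mem_nhdsWithin (Icc_mem_nhdsLE_of_mem ⟨hlt, hle⟩)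
  · have hx : x ∈ Ico (⌊x⌋ : ℝ) (⌊x⌋ + 1) := ⟨Int.floor_le x, Int.lt_floor_add_one x⟩
    exact ((hon _) x (Ico_subset_Icc_self hx)).mono_of_mem_nhdsWithin (Icc_mem_nhdsGE_of_mem hx)

theorem nonempty_homeomorph_circle_of_periodic [TopologicalSpace X] [T2Space X] {f : ℝ → X}
    {T : ℝ} (hT : 0 < T) (hcont : Continuous f) (hper : f.Periodic T) (hsurj : f.Surjective)
    (hinj : ∀ x y, f x = f y → (x : AddCircle T) = y) : Nonempty (X ≃ₜ Circle) := by
  have : Fact (0 < T) := ⟨hT⟩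
  have hlift : Continuous hper.lift := continuous_coinduced_dom.2 hcont
  have hbij : hper.lift.Bijective := by
    refine ⟨fun a b => ?_, fun x => ?_⟩
    · induction a using QuotientAddGroup.induction_on
      induction b using QuotientAddGroup.induction_on
      exact hinj _ _
    · obtain ⟨y, rfl⟩ := hsurj x
      exact ⟨y, rfl⟩
  let e : AddCircle T ≃ₜ X :=
    Continuous.homeoOfEquivCompactToT2 (f := Equiv.ofBijective _ hbij) hlift
  exact ⟨e.symm.trans (AddCircle.homeomorphCircle hT.ne')⟩

end Concat

theorem perm_zpow_apply_ne {α : Type*} {f r : Equiv.Perm α} (h : SemiconjBy r f f⁻¹)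
    (hr : ∀ a, r a ≠ a) (hfr : ∀ a, f a ≠ r a) (m : ℤ) (a : α) : (f ^ m) a ≠ r a := by
  intro hm
  have hconj : ∀ k : ℤ, r ((f ^ k) a) = (f ^ (-k)) (r a) := fun k => by
    simpa [inv_zpow'] using Equiv.congr_fun (h.zpow_right k).eq a
  obtain ⟨k, rfl | rfl⟩ := Int.even_or_odd' m
  · refine hr ((f ^ k) a) ?_
    rw [hconj, ← hm, ← Equiv.Perm.mul_apply, ← zpow_add, two_mul, neg_add_cancel_left]
  · refine hfr ((f ^ k) a) ?_
    rw [hconj, ← hm, ← Equiv.Perm.mul_apply, ← Equiv.Perm.mul_apply, ← zpow_add, ← zpow_one_add]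
    congr 2
    ring

theorem perm_zpow_apply_eq_iff {α : Type*} (f : Equiv.Perm α) (k l : ℤ) (a : α) :
    (f ^ k) a = (f ^ l) a ↔ (Function.minimalPeriod f a : ℤ) ∣ k - l := by
  have hperiod : (f ^ (k - l)) a = a ↔ (Function.minimalPeriod f a : ℤ) ∣ k - l :=
    MulAction.zpow_smul_eq_iff_minimalPeriod_dvd (a := f) (b := a)
  rw [← hperiod, ← (f ^ l).injective.eq_iff (a := (f ^ (k - l)) a), ← Equiv.Perm.mul_apply,
    ← zpow_add, add_sub_cancel]

namespace GraphStruct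

variable {X : Type*} [TopologicalSpace X] {G : GraphStruct X}

theorem exists_ne_one_dartMap_eq {S : Set G.Dart} (hrev : ∀ p ∈ S, p.rev ∈ S) {p : G.Dart}
    (hp : p ∈ S) (t : I) : ∃ q ∈ S, ∃ s ≠ 1, dartMap q s = dartMap p t := by
  obtain rfl | ht := eq_or_ne t 1
  · exact ⟨p.rev, hrev p hp, 0, zero_ne_one, by rw [dartMap_rev, unitInterval.symm_zero]⟩
  · exact ⟨p, hp, t, ht, rfl⟩

theorem eq_univ_of_rev_mem_of_start_mem [T2Space X] [PreconnectedSpace X] {S : Set G.Dart}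
    (hne : S.Nonempty) (hrev : ∀ p ∈ S, p.rev ∈ S)
    (hstart : ∀ p ∈ S, ∀ q, dartMap p 0 = dartMap q 0 → q ∈ S) : S = univ := by
  have hrev' : ∀ p ∈ Sᶜ, p.rev ∈ Sᶜ := fun p hp h => hp (p.rev_rev ▸ hrev _ h)
  have hdisj : ∀ p ∈ S, ∀ q ∈ Sᶜ, ∀ s t, dartMap p s ≠ dartMap q t := by
    intro p hp q hq s t h
    obtain ⟨p', hp', s', hs', hps⟩ := exists_ne_one_dartMap_eq hrev hp s
    obtain ⟨q', hq', t', ht', hqt⟩ := exists_ne_one_dartMap_eq hrev' hq t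
    have h' := hps.trans (h.trans hqt.symm)
    rcases eq_or_eq_rev_or_eq_zero_of_dartMap_eq hs' ht' h' with
      ⟨rfl, -⟩ | ⟨rfl, -⟩ | ⟨rfl, rfl⟩
    exacts [hq' hp', hq' (hrev _ hp'), hq' (hstart p' hp' q' h')]
  have hclosed : ∀ T : Set G.Dart, IsClosed (⋃ p ∈ T, range (dartMap p)) := fun T =>
    T.toFinite.isClosed_biUnion fun p _ => (isCompact_range (continuous_dartMap p)).isClosed
  have hcompl : (⋃ p ∈ S, range (dartMap p))ᶜ = ⋃ p ∈ Sᶜ, range (dartMap p) := by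
    ext x
    obtain ⟨p, t, -, rfl⟩ := G.exists_dartMap_eq x
    simp only [mem_compl_iff, mem_iUnion, mem_range, exists_prop, not_exists, not_and]
    refine ⟨fun h => ⟨p, fun hp => h p hp t rfl, t, rfl⟩, ?_⟩
    rintro ⟨q, hq, s, hqs⟩ r hr u hru
    exact hdisj r hr q hq u s (hru.trans hqs.symm)
  obtain ⟨p, hp⟩ := hne
  have hclopen : IsClopen (⋃ p ∈ S, range (dartMap p)) :=
    ⟨hclosed S, isClosed_compl_iff.1 (hcompl ▸ hclosed Sᶜ)⟩
  have huniv := hclopen.eq_univ ⟨dartMap p 0, mem_biUnion hp ⟨0, rfl⟩⟩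
  refine eq_univ_of_forall fun q => by_contra fun hq => ?_
  obtain ⟨r, hr, s, hrs⟩ := mem_iUnion₂.1 (huniv.ge (mem_univ (dartMap q 0)))
  exact hdisj r hr q hq s 0 hrs

/-- At the end of the oriented edge `p` one can only turn back or continue along `next p`. -/
def IsTraversal (next : Equiv.Perm G.Dart) : Prop :=
  ∀ p, next p ≠ p.rev ∧ ∀ q, dartMap q 0 = dartMap p 1 ↔ q = p.rev ∨ q = next p

theorem exists_isTraversal (hdeg : ∀ v ∈ G.vertexSet, G.degree v = 2) :
    ∃ next : Equiv.Perm G.Dart, IsTraversal next := by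
  have hnext : ∀ p : G.Dart, ∃ r, r ≠ p.rev ∧
      ∀ q, dartMap q 0 = dartMap p 1 ↔ q = p.rev ∨ q = r := by
    intro p
    have hp : dartMap p.rev 0 = dartMap p 1 := by rw [dartMap_rev, unitInterval.symm_zero]
    have hcard := hdeg _ (hp ▸ dartMap_zero_mem_vertexSet p.rev)
    rw [degree_eq_ncard] at hcard
    obtain ⟨r, hr, hne⟩ := exists_ne_of_one_lt_ncard (hcard ▸ one_lt_two) p.rev
    refine ⟨r, hne, fun q => ?_⟩
    have hpair : ({p.rev, r} : Set G.Dart) = {q | dartMap q 0 = dartMap p 1} :=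
      eq_of_subset_of_ncard_le (pair_subset hp hr) (by rw [hcard, ncard_pair hne.symm])
    exact (Set.ext_iff.1 hpair q).symm
  choose next hne hnext using hnext
  have hinj : next.Injective := by
    intro p q hpq
    have hend : dartMap q.rev 0 = dartMap p 1 :=
      ((hnext q _).2 (.inl rfl)).trans
        (((hnext q _).2 (.inr rfl)).symm.trans ((hnext p _).2 (.inr hpq.symm)))
    rcases (hnext p _).1 hend with h | h
    · exact Dart.rev_rev p ▸ h ▸ (Dart.rev_rev q)
    · exact absurd (hpq.symm.trans h.symm) (hne q)
  exact ⟨.ofBijective next (Finite.injective_iff_bijective.1 hinj), fun p => ⟨hne p, hnext p⟩⟩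

/-- The walk through the oriented edges `(next ^ k) p`, `k ∈ ℤ`, one per unit of time. -/
noncomputable def walk (next : Equiv.Perm G.Dart) (p : G.Dart) : ℝ → X :=
  concat fun k : ℤ => dartMap ((next ^ k) p)

namespace IsTraversal

variable {next : Equiv.Perm G.Dart}

theorem dartMap_one (h : IsTraversal next) (p : G.Dart) : dartMap p 1 = dartMap (next p) 0 :=
  (((h p).2 _).2 (.inr rfl)).symm

theorem next_rev_next (h : IsTraversal next) (p : G.Dart) : next (next p).rev = p.rev := by
  have hstart : dartMap p.rev 0 = dartMap (next p).rev 1 := by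
    rw [dartMap_rev, dartMap_rev, unitInterval.symm_zero, unitInterval.symm_one, h.dartMap_one]
  rcases ((h _).2 _).1 hstart with hp | hp
  · exact absurd (hp.trans (Dart.rev_rev _)).symm (h p).1
  · exact hp.symm

theorem zpow_apply_ne_rev (h : IsTraversal next) (m : ℤ) (p : G.Dart) : (next ^ m) p ≠ p.rev := by
  let r : Equiv.Perm G.Dart := Function.Involutive.toPerm Dart.rev Dart.rev_rev
  have hr : SemiconjBy r next next⁻¹ :=
    Equiv.ext fun q => Equiv.Perm.eq_inv_iff_eq.2 (h.next_rev_next q)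
  exact perm_zpow_apply_ne hr Dart.rev_ne (fun q => (h q).1) m p

theorem zpow_apply_ne_rev_zpow_apply (h : IsTraversal next) (k l : ℤ) (p : G.Dart) :
    (next ^ k) p ≠ ((next ^ l) p).rev := by
  simpa only [← Equiv.Perm.mul_apply, ← zpow_add, sub_add_cancel]
    using h.zpow_apply_ne_rev (k - l) ((next ^ l) p)

theorem start_zpow_add_one_eq_iff (h : IsTraversal next) (k : ℤ) (p q : G.Dart) :
    dartMap q 0 = dartMap ((next ^ (k + 1)) p) 0 ↔
      q = ((next ^ k) p).rev ∨ q = (next ^ (k + 1)) p := by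
  rw [add_comm, zpow_one_add, Equiv.Perm.mul_apply, ← h.dartMap_one]
  exact (h _).2 q

theorem zpow_apply_eq_of_start_eq (h : IsTraversal next) {k l : ℤ} {p : G.Dart}
    (hkl : dartMap ((next ^ k) p) 0 = dartMap ((next ^ l) p) 0) :
    (next ^ k) p = (next ^ l) p := by
  rw [← sub_add_cancel l 1] at hkl ⊢
  exact ((h.start_zpow_add_one_eq_iff _ _ _).1 hkl).resolve_left
    (h.zpow_apply_ne_rev_zpow_apply _ _ _)

theorem exists_eq_zpow_or_eq_rev [T2Space X] [PreconnectedSpace X] (h : IsTraversal next)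
    (p q : G.Dart) : ∃ k : ℤ, q = (next ^ k) p ∨ q = ((next ^ k) p).rev := by
  let S : Set G.Dart := {q | ∃ k : ℤ, q = (next ^ k) p ∨ q = ((next ^ k) p).rev}
  suffices S = univ from this.ge (mem_univ q)
  refine eq_univ_of_rev_mem_of_start_mem ⟨p, 0, .inl rfl⟩ ?_ ?_
  · rintro _ ⟨k, rfl | rfl⟩
    exacts [⟨k, .inr rfl⟩, ⟨k, .inl (Dart.rev_rev _)⟩]
  · suffices hS : ∀ (k : ℤ) (r : G.Dart), dartMap r 0 = dartMap ((next ^ (k + 1)) p) 0 → r ∈ S by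
      rintro _ ⟨k, rfl | rfl⟩ r hr
      · exact hS (k - 1) r (by rw [sub_add_cancel, hr])
      · refine hS k r ?_
        rw [← hr, h.start_zpow_add_one_eq_iff]
        exact .inl rfl
    intro k r hr
    rcases (h.start_zpow_add_one_eq_iff k p r).1 hr with hr | hr
    exacts [⟨k, .inr hr⟩, ⟨k + 1, .inl hr⟩]

theorem dartMap_zpow_one (h : IsTraversal next) (p : G.Dart) (k : ℤ) :
    dartMap ((next ^ k) p) 1 = dartMap ((next ^ (k + 1)) p) 0 := by
  rw [h.dartMap_one, ← Equiv.Perm.mul_apply, ← zpow_one_add, add_comm]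

theorem walk_intCast_add (h : IsTraversal next) (p : G.Dart) (k : ℤ) (t : I) :
    walk next p (k + t) = dartMap ((next ^ k) p) t :=
  concat_intCast_add (h.dartMap_zpow_one p) k t

theorem continuous_walk (h : IsTraversal next) (p : G.Dart) : Continuous (walk next p) :=
  continuous_concat (h.dartMap_zpow_one p) fun _ => continuous_dartMap _

theorem surjective_walk [T2Space X] [PreconnectedSpace X] (h : IsTraversal next) (p : G.Dart) :
    (walk next p).Surjective := by
  intro x
  obtain ⟨q, t, -, rfl⟩ := G.exists_dartMap_eq x
  obtain ⟨k, rfl | rfl⟩ := h.exists_eq_zpow_or_eq_rev p q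
  · exact ⟨k + t, h.walk_intCast_add p k t⟩
  · exact ⟨k + σ t, by rw [h.walk_intCast_add, dartMap_rev]⟩

theorem periodic_walk (h : IsTraversal next) (p : G.Dart) :
    (walk next p).Periodic (Function.minimalPeriod next p) := by
  intro x
  obtain ⟨k, t, -, rfl⟩ := exists_eq_intCast_add x
  have hk : (next ^ (k + Function.minimalPeriod next p)) p = (next ^ k) p := by
    rw [perm_zpow_apply_eq_iff, add_sub_cancel_left]
  rw [h.walk_intCast_add, ← hk, ← h.walk_intCast_add]
  push_cast
  rw [add_right_comm]

theorem coe_eq_coe_of_walk_eq (h : IsTraversal next) (p : G.Dart) {x y : ℝ}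
    (hxy : walk next p x = walk next p y) :
    (x : AddCircle (Function.minimalPeriod next p : ℝ)) = y := by
  obtain ⟨k, s, hs, rfl⟩ := exists_eq_intCast_add x
  obtain ⟨l, t, ht, rfl⟩ := exists_eq_intCast_add y
  rw [h.walk_intCast_add, h.walk_intCast_add] at hxy
  obtain ⟨hkl, rfl⟩ : (next ^ k) p = (next ^ l) p ∧ s = t := by
    rcases eq_or_eq_rev_or_eq_zero_of_dartMap_eq hs ht hxy with heq | ⟨hrev, -⟩ | ⟨rfl, rfl⟩
    · exact heq
    · exact absurd hrev (h.zpow_apply_ne_rev_zpow_apply l k p)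
    · exact ⟨h.zpow_apply_eq_of_start_eq hxy, rfl⟩
  obtain ⟨m, hm⟩ := (perm_zpow_apply_eq_iff next k l p).1 hkl
  refine QuotientAddGroup.eq_iff_sub_mem.2 (AddSubgroup.mem_zmultiples_iff.2 ⟨m, ?_⟩)
  rw [add_sub_add_right_eq_sub, ← Int.cast_sub, hm, zsmul_eq_mul, mul_comm, Int.cast_mul,
    Int.cast_natCast]

end IsTraversal

theorem nonempty_homeomorph_circle_of_degree_eq_two [T2Space X] [ConnectedSpace X]
    (hdeg : ∀ v ∈ G.vertexSet, G.degree v = 2) : Nonempty (X ≃ₜ Circle) := by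
  obtain ⟨next, h⟩ := exists_isTraversal hdeg
  obtain ⟨p, -⟩ := G.exists_dartMap_eq (Classical.arbitrary X)
  have hpos : 0 < Function.minimalPeriod next p :=
    Function.minimalPeriod_pos_of_mem_periodicPts (next.injective.mem_periodicPts p)
  exact nonempty_homeomorph_circle_of_periodic (Nat.cast_pos.2 hpos) (h.continuous_walk p)
    (h.periodic_walk p) (h.surjective_walk p) fun _ _ => h.coe_eq_coe_of_walk_eq p

end GraphStruct

/-- For a topological graph `X` the following are equivalent: `X` is a circle; some group
of homeomorphisms acts minimally (`0 ∈ P_h(X)`); every vertex has degree `2`. In that case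
`P_h(X) = {0, 1, 2, …} ∪ {+∞}`. -/
theorem graph_circle_tfae (X : Type*) [MetricSpace X] [CompactSpace X]
    [ConnectedSpace X] (G : GraphStruct X) :
    (Nonempty (X ≃ₜ Circle) ↔ ∃ H : Subgroup (X ≃ₜ X), height H = 0) ∧
    (Nonempty (X ≃ₜ Circle) ↔ ∀ v ∈ G.vertexSet, G.degree v = 2) ∧
    (Nonempty (X ≃ₜ Circle) → PH X = Set.univ) := by
  have hPH : Nonempty (X ≃ₜ Circle) → PH X = Set.univ := fun ⟨e⟩ =>
    PH_eq_univ_of_homeomorph_circle e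
  have hminimal : Nonempty (X ≃ₜ Circle) → ∃ H : Subgroup (X ≃ₜ X), height H = 0 := fun h =>
    (hPH h).ge (mem_univ 0)
  have hdegree : (∃ H : Subgroup (X ≃ₜ X), height H = 0) → ∀ v ∈ G.vertexSet, G.degree v = 2 :=
    fun ⟨_, hH⟩ _ => GraphStruct.degree_eq_two_of_height_eq_zero hH
  have hcircle : (∀ v ∈ G.vertexSet, G.degree v = 2) → Nonempty (X ≃ₜ Circle) :=
    GraphStruct.nonempty_homeomorph_circle_of_degree_eq_two
  exact ⟨⟨hminimal, hcircle ∘ hdegree⟩, ⟨hdegree ∘ hminimal, hcircle⟩, hPH⟩
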